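/- Let λ and μ be partitions and let N be an integer. Then the number of partitions ρ with |ρ| = N, μ ≺ ρ and ρ ≺ λ equals the number of partitions ρ with |ρ| = |λ| + |μ| − N, μ ≺ ρ and ρ ≺ λ. -/

import Mathlib

/-- A partition: a weakly decreasing sequence of nonnegative integers, eventually zero. -/
structure PartitionSeq where
  part : ℕ → ℕ
  antitone' : ∀ ⦃i j : ℕ⦄, i ≤ j → part j ≤ part i
  eventually_zero : ∃ N : ℕ, ∀ i : ℕ, N ≤ i → part i = 0

/-- The size `|ν| = ∑_j ν_j` of a partition. -/
noncomputable def size (ν : PartitionSeq) : ℕ := ∑ᶠ j : ℕ, ν.part j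

/-- `Interlaces μ λ` means `μ ≺ λ`, i.e. `λ_0 ≥ μ_0 ≥ λ_1 ≥ μ_1 ≥ ⋯`. -/
def Interlaces (μ lam : PartitionSeq) : Prop :=
  ∀ j : ℕ, μ.part j ≤ lam.part j ∧ lam.part (j + 1) ≤ μ.part j

/-!
Once `μ` and `λ` are fixed, the conditions `μ ≺ ρ ≺ λ` decouple into independent bounds
`max (μ_j, λ_{j+1}) ≤ ρ_j ≤ min (λ_j, μ_{j-1})` with `μ_{-1} = ∞`, and they already force `ρ` to be
weakly decreasing. So the admissible `ρ` are all the points of a box, and the reflection of the box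
in its centre is an involution. It replaces `|ρ|` by `|λ| + |μ| - |ρ|`, because the lower bound at
`j` and the upper bound at `j + 1` are the maximum and the minimum of the same two numbers
`μ_j` and `λ_{j+1}`.
-/

open Function Set

theorem ncard_sep_eq_ncard_sep_sub {α G : Type*} [AddCommGroup G] {s : Set α} {σ : α → α}
    {f : α → G} {c : G} (hmaps : MapsTo σ s s) (hinv : LeftInvOn σ σ s)
    (hf : ∀ x ∈ s, f (σ x) = c - f x) (a : G) :
    {x ∈ s | f x = a}.ncard = {x ∈ s | f x = c - a}.ncard := by
  have hreflect (b : G) : MapsTo σ {x ∈ s | f x = b} {x ∈ s | f x = c - b} := by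
    rintro x ⟨hx, rfl⟩
    exact ⟨hmaps hx, hf x hx⟩
  have hback : MapsTo σ {x ∈ s | f x = c - a} {x ∈ s | f x = a} := by
    simpa only [sub_sub_cancel] using hreflect (c - a)
  have hinvOn : InvOn σ σ {x ∈ s | f x = a} {x ∈ s | f x = c - a} :=
    ⟨hinv.mono (sep_subset _ _), hinv.mono (sep_subset _ _)⟩
  exact (hinvOn.bijOn (hreflect a) hback).ncard_eq

section Box

variable {α : Type*} [AddCommMonoid α] [PartialOrder α] [IsOrderedCancelAddMonoid α] [Sub α]
  [OrderedSub α]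

theorem mapsTo_add_tsub_Icc (a b : α) : MapsTo (a + b - ·) (Icc a b) (Icc a b) := by
  intro x hx
  refine ⟨le_tsub_of_add_le_right ?_, tsub_le_iff_right.2 ?_⟩
  · gcongr
    exact hx.2
  · rw [add_comm b]
    gcongr
    exact hx.1

theorem leftInvOn_add_tsub_Icc [CanonicallyOrderedAdd α] (a b : α) :
    LeftInvOn (a + b - ·) (a + b - ·) (Icc a b) :=
  fun _ hx ↦ tsub_tsub_cancel_of_le (hx.2.trans le_add_self)

end Box

section Finsum

variable {ι M : Type*} [AddCommMonoid M]

theorem finsum_eq_zero_add_finsum_succ {f : ℕ → M} (hf : f.HasFiniteSupport) :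
    ∑ᶠ j, f j = f 0 + ∑ᶠ j, f (j + 1) := by
  have hsucc : ∑ᶠ (j) (_ : j ≠ 0), f j = ∑ᶠ j, f (j + 1) := by
    rw [← finsum_mem_range Nat.succ_injective]
    simp only [Nat.range_succ, mem_ofPred_eq, Nat.pos_iff_ne_zero]
  rw [← add_finsum_cond_ne 0 hf, hsucc]

variable [PartialOrder M] [CanonicallyOrderedAdd M]

theorem hasFiniteSupport_of_le {f g : ι → M} (hfg : f ≤ g) (hg : g.HasFiniteSupport) :
    f.HasFiniteSupport :=
  hg.subset fun i hfi hgi ↦ hfi (nonpos_iff_eq_zero.1 ((hfg i).trans_eq hgi))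

variable [Sub M] [OrderedSub M] [IsOrderedCancelAddMonoid M]

theorem finsum_add_tsub_add_finsum {a b x : ι → M} (hb : b.HasFiniteSupport)
    (hx : x ∈ Icc a b) :
    ∑ᶠ i, (a + b - x) i + ∑ᶠ i, x i = ∑ᶠ i, a i + ∑ᶠ i, b i := by
  have hsupp {y : ι → M} (hy : y ∈ Icc a b) : y.HasFiniteSupport := hasFiniteSupport_of_le hy.2 hb
  have ha : a.HasFiniteSupport := hasFiniteSupport_of_le (hx.1.trans hx.2) hb
  rw [← finsum_add_distrib (hsupp (mapsTo_add_tsub_Icc a b hx)) (hsupp hx),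
    ← finsum_add_distrib ha hb]
  exact finsum_congr fun i ↦ tsub_add_cancel_of_le ((hx.2 i).trans le_add_self)

end Finsum

theorem ncard_sep_Icc_finsum_eq {ι : Type*} {a b : ι → ℕ} (hb : b.HasFiniteSupport) (N : ℤ) :
    {x ∈ Icc a b | ((∑ᶠ i, x i : ℕ) : ℤ) = N}.ncard =
      {x ∈ Icc a b |
        ((∑ᶠ i, x i : ℕ) : ℤ) = ((∑ᶠ i, a i + ∑ᶠ i, b i : ℕ) : ℤ) - N}.ncard := by
  refine ncard_sep_eq_ncard_sep_sub (mapsTo_add_tsub_Icc a b) (leftInvOn_add_tsub_Icc a b)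
    (fun x hx ↦ eq_sub_of_add_eq ?_) N
  exact_mod_cast finsum_add_tsub_add_finsum hb hx

namespace PartitionSeq

theorem part_injective : Injective part := by
  rintro ⟨f, _, _⟩ ⟨g, _, _⟩ rfl
  rfl

theorem hasFiniteSupport_part (ν : PartitionSeq) : ν.part.HasFiniteSupport := by
  obtain ⟨n, hn⟩ := ν.eventually_zero
  exact (finite_Iio n).subset fun j hj ↦ not_le.1 (mt (hn j) hj)

/-- The least value that `μ ≺ ρ ≺ λ` allows for the part `ρ_j`. -/
def lowerPart (lam mu : PartitionSeq) (j : ℕ) : ℕ := max (mu.part j) (lam.part (j + 1))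

/-- The greatest value that `μ ≺ ρ ≺ λ` allows for the part `ρ_j`; there is no `μ_{-1}` to bound
the part `ρ_0`. -/
def upperPart (lam mu : PartitionSeq) : ℕ → ℕ
  | 0 => lam.part 0
  | j + 1 => min (mu.part j) (lam.part (j + 1))

variable (lam mu : PartitionSeq)

theorem upperPart_le_part : upperPart lam mu ≤ lam.part
  | 0 => le_rfl
  | _ + 1 => min_le_right _ _

theorem upperPart_succ_le_lowerPart (j : ℕ) : upperPart lam mu (j + 1) ≤ lowerPart lam mu j :=
  min_le_max

theorem hasFiniteSupport_upperPart : (upperPart lam mu).HasFiniteSupport :=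
  hasFiniteSupport_of_le (upperPart_le_part lam mu) lam.hasFiniteSupport_part

theorem finsum_lowerPart_add_finsum_upperPart :
    ∑ᶠ j, lowerPart lam mu j + ∑ᶠ j, upperPart lam mu j = size lam + size mu := by
  have hmu := mu.hasFiniteSupport_part
  have hlam_succ : HasFiniteSupport fun j ↦ lam.part (j + 1) :=
    lam.hasFiniteSupport_part.fun_comp_of_injective (add_left_injective 1)
  have hupper := hasFiniteSupport_upperPart lam mu
  have hmax_add_min : ∑ᶠ j, lowerPart lam mu j + ∑ᶠ j, upperPart lam mu (j + 1) =
      ∑ᶠ j, mu.part j + ∑ᶠ j, lam.part (j + 1) := by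
    rw [← finsum_add_distrib (f := lowerPart lam mu) (hmu.max hlam_succ)
      (hupper.fun_comp_of_injective (add_left_injective 1)), ← finsum_add_distrib hmu hlam_succ]
    exact finsum_congr fun j ↦ max_add_min _ _
  calc
    ∑ᶠ j, lowerPart lam mu j + ∑ᶠ j, upperPart lam mu j
      = lam.part 0 + (∑ᶠ j, lowerPart lam mu j + ∑ᶠ j, upperPart lam mu (j + 1)) := by
        rw [finsum_eq_zero_add_finsum_succ hupper, add_left_comm]
        rfl
    _ = (lam.part 0 + ∑ᶠ j, lam.part (j + 1)) + ∑ᶠ j, mu.part j := by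
        rw [hmax_add_min, add_comm (∑ᶠ j, mu.part j), add_assoc]
    _ = size lam + size mu := by
        rw [← finsum_eq_zero_add_finsum_succ lam.hasFiniteSupport_part, size, size]

variable {lam mu}

theorem interlaces_and_interlaces_iff {ρ : PartitionSeq} :
    Interlaces mu ρ ∧ Interlaces ρ lam ↔ ρ.part ∈ Icc (lowerPart lam mu) (upperPart lam mu) := by
  constructor
  · rintro ⟨hmu, hlam⟩
    refine ⟨fun j ↦ max_le (hmu j).1 (hlam j).2, fun j ↦ ?_⟩
    cases j with
    | zero => exact (hlam 0).1
    | succ j => exact le_min (hmu j).2 (hlam (j + 1)).1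
  · rintro ⟨hlower, hupper⟩
    exact ⟨fun j ↦ ⟨(le_max_left _ _).trans (hlower j), (hupper (j + 1)).trans (min_le_left _ _)⟩,
      fun j ↦ ⟨(hupper j).trans (upperPart_le_part lam mu j),
        (le_max_right _ _).trans (hlower j)⟩⟩

/-- The partition with parts `f j`, for a sequence `f` within the bounds imposed by
`μ ≺ ρ ≺ λ`. -/
def ofMemIcc {f : ℕ → ℕ} (hf : f ∈ Icc (lowerPart lam mu) (upperPart lam mu)) : PartitionSeq where
  part := f
  antitone' := antitone_nat_of_succ_le fun j ↦
    (hf.2 (j + 1)).trans <| (upperPart_succ_le_lowerPart lam mu j).trans (hf.1 j)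
  eventually_zero := by
    obtain ⟨n, hn⟩ := lam.eventually_zero
    refine ⟨n, fun j hj ↦ Nat.eq_zero_of_le_zero ?_⟩
    exact ((hf.2 j).trans (upperPart_le_part lam mu j)).trans_eq (hn j hj)

variable (lam mu)

theorem ncard_size_eq_and_interlaces (N : ℤ) :
    {ρ : PartitionSeq | (size ρ : ℤ) = N ∧ Interlaces mu ρ ∧ Interlaces ρ lam}.ncard =
      {f ∈ Icc (lowerPart lam mu) (upperPart lam mu) | ((∑ᶠ j, f j : ℕ) : ℤ) = N}.ncard := by
  rw [← ncard_image_of_injective _ part_injective]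
  congr 1
  ext f
  constructor
  · rintro ⟨ρ, ⟨hsize, hρ⟩, rfl⟩
    exact ⟨interlaces_and_interlaces_iff.1 hρ, hsize⟩
  · rintro ⟨hf, hsum⟩
    exact ⟨ofMemIcc hf, ⟨hsum, interlaces_and_interlaces_iff.2 hf⟩, rfl⟩

end PartitionSeq

open PartitionSeq

/-- For partitions `λ, μ` and `N ∈ ℤ`, the number of partitions `ρ` with
`|ρ| = N`, `μ ≺ ρ` and `ρ ≺ λ` equals the number of partitions `ρ` with
`|ρ| = |λ| + |μ| − N`, `μ ≺ ρ` and `ρ ≺ λ`. -/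
theorem statement8 (lam mu : PartitionSeq) (N : ℤ) :
    {ρ : PartitionSeq | (size ρ : ℤ) = N ∧ Interlaces mu ρ ∧ Interlaces ρ lam}.ncard
      = {ρ : PartitionSeq | (size ρ : ℤ) = (size lam : ℤ) + (size mu : ℤ) - N ∧
          Interlaces mu ρ ∧ Interlaces ρ lam}.ncard := by
  rw [ncard_size_eq_and_interlaces, ncard_size_eq_and_interlaces,
    ncard_sep_Icc_finsum_eq (hasFiniteSupport_upperPart lam mu),
    finsum_lowerPart_add_finsum_upperPart, Nat.cast_add]
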